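/- Unsmoothed substate perturbation (construction step in the proof of the Substate Perturbation Lemma): Let X and B be finite nonempty types. Let σ_XB be a quantum state on X × B with marginal σ_B on B, let ψ_X be a quantum state on X, and let K > 0 be a real number with σ_XB ≤ K · (ψ_X ⊗ σ_B) in the Loewner order. Then for every quantum state ρ_B on B there exists a quantum state ρ'_XB on X × B such that: the marginal of ρ'_XB on B equals ρ_B, F(ρ'_XB, σ_XB) ≥ F(ρ_B, σ_B), and ρ'_XB ≤ 2K · (ψ_X ⊗ ρ_B) in the Loewner order. -/

import Mathlib

open Matrix
open scoped Kronecker Classical ComplexOrder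

noncomputable section

/-- A quantum state: a positive semidefinite complex matrix with trace 1. -/
def IsState {S : Type*} [Fintype S] [DecidableEq S] (ρ : Matrix S S ℂ) : Prop :=
  ρ.PosSemidef ∧ ρ.trace = 1

/-- The positive semidefinite square root (junk value `0` off the PSD matrices). -/
noncomputable def psdSqrt {S : Type*} [Fintype S] [DecidableEq S] (A : Matrix S S ℂ) :
    Matrix S S ℂ :=
  if h : A.PosSemidef then
    h.1.eigenvectorUnitary.1 * diagonal ((fun x : ℝ => (x : ℂ)) ∘ Real.sqrt ∘ h.1.eigenvalues) *
      (star h.1.eigenvectorUnitary : Matrix S S ℂ)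
  else 0

/-- Fidelity F(ρ,σ) = Tr √(√σ ρ √σ). -/
noncomputable def fidelity {S : Type*} [Fintype S] [DecidableEq S]
    (ρ σ : Matrix S S ℂ) : ℝ :=
  ((psdSqrt (psdSqrt σ * ρ * psdSqrt σ)).trace).re

/-- Marginal on the second factor (partial trace over the first factor). -/
noncomputable def margB {A B : Type*} [Fintype A] [Fintype B]
    (ρ : Matrix (A × B) (A × B) ℂ) : Matrix B B ℂ :=
  Matrix.of fun b b' => ∑ a, ρ (a, b) (a, b')

/-!
The fidelity has the variational form `F(ρ, σ) = max {Re Tr (T σ) : T σ Tᴴ ≤ ρ}`: with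
`|√ρ √σ| = (√ρ √σ)ᴴ W` for a contraction `W`, the maximum is attained at `T = √ρ W √σ⁺`. Take an
optimal `T` for `ρ_B` and `σ_B`, and extend `ρ_B` by
`ρ' = (1 ⊗ T) σ_XB (1 ⊗ T)ᴴ + ψ_X ⊗ (ρ_B - T σ_B Tᴴ)`.
Then `1 ⊗ T` is feasible for `F(ρ', σ_XB)`, with value `Re Tr ((1 ⊗ T) σ_XB) = Re Tr (T σ_B)`.
Conjugating `σ_XB ≤ K (ψ_X ⊗ σ_B)` by `1 ⊗ T` bounds the first summand of `ρ'` by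
`K ψ_X ⊗ T σ_B Tᴴ`; since `K ≥ 1`, adding the second gives `ρ' ≤ K (ψ_X ⊗ ρ_B)`, so that even the
constant `K` in place of `2 K` suffices.
-/

section Loewner

open scoped MatrixOrder

variable {𝕜 k l m n : Type*} [RCLike 𝕜] [Fintype k] [Fintype l] [Finite m] [Fintype n]

theorem mul_mul_conjTranspose_le {A B : Matrix n n 𝕜} (h : A ≤ B) (C : Matrix m n 𝕜) :
    C * A * Cᴴ ≤ C * B * Cᴴ := by
  have h' := (le_iff.1 h).mul_mul_conjTranspose_same C
  rwa [Matrix.mul_sub, Matrix.sub_mul] at h'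

theorem le_one_of_isHermitian_of_mul_self_eq [DecidableEq n] {E : Matrix n n 𝕜}
    (hE : E.IsHermitian) (hEE : E * E = E) : E ≤ 1 := by
  have h := posSemidef_self_mul_conjTranspose (1 - E)
  rwa [conjTranspose_sub, conjTranspose_one, hE.eq, Matrix.mul_sub, Matrix.sub_mul,
    Matrix.sub_mul, hEE, Matrix.mul_one, Matrix.one_mul, Matrix.mul_one, sub_self, sub_zero] at h

/-- The Moore–Penrose inverse of a Hermitian matrix, obtained by inverting its nonzero eigenvalues
through the functional calculus (junk value `0` off the Hermitian matrices). -/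
def pseudoinverse [DecidableEq n] (A : Matrix n n 𝕜) : Matrix n n 𝕜 :=
  cfc (fun x : ℝ => x⁻¹) A

theorem pseudoinverse_isHermitian [DecidableEq n] (A : Matrix n n 𝕜) :
    (pseudoinverse A).IsHermitian :=
  cfc_predicate _ A

theorem pseudoinverse_mul_self_comm [DecidableEq n] {A : Matrix n n 𝕜} (hA : A.IsHermitian) :
    pseudoinverse A * A = A * pseudoinverse A := by
  have h := cfc_commute_cfc (fun x : ℝ => x⁻¹) id A
  rw [cfc_id ℝ A hA.isSelfAdjoint] at h
  exact h.eq

theorem mul_pseudoinverse_mul [DecidableEq n] {A : Matrix n n 𝕜} (hA : A.IsHermitian) :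
    A * pseudoinverse A * A = A := by
  have hcont (f : ℝ → ℝ) : ContinuousOn f (spectrum ℝ A) := A.finite_real_spectrum.continuousOn f
  have hid : cfc (fun x : ℝ => x) A = A := cfc_id' ℝ A hA.isSelfAdjoint
  calc A * pseudoinverse A * A
      = cfc (fun x : ℝ => x * x⁻¹ * x) A := by
        rw [cfc_mul _ _ A (hcont _) (hcont _), cfc_mul _ _ A (hcont _) (hcont _), hid,
          pseudoinverse]
    _ = A := by simp only [mul_inv_mul_cancel, hid]

theorem pseudoinverse_mul_mul_pseudoinverse [DecidableEq n] {A : Matrix n n 𝕜}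
    (hA : A.IsHermitian) : pseudoinverse A * A * pseudoinverse A = pseudoinverse A := by
  have hcont (f : ℝ → ℝ) : ContinuousOn f (spectrum ℝ A) := A.finite_real_spectrum.continuousOn f
  have hinv (x : ℝ) : x⁻¹ * x * x⁻¹ = x⁻¹ := by simpa only [inv_inv] using mul_inv_mul_cancel x⁻¹
  calc pseudoinverse A * A * pseudoinverse A
      = cfc (fun x : ℝ => x⁻¹ * x * x⁻¹) A := by
        rw [cfc_mul _ _ A (hcont _) (hcont _), cfc_mul _ _ A (hcont _) (hcont _),
          cfc_id' ℝ A hA.isSelfAdjoint, pseudoinverse]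
    _ = pseudoinverse A := by simp only [hinv, pseudoinverse]

theorem conjTranspose_mul_pseudoinverse_mul_le_one [DecidableEq k] [DecidableEq n]
    (B : Matrix n k 𝕜) : Bᴴ * pseudoinverse (B * Bᴴ) * B ≤ 1 := by
  set J := pseudoinverse (B * Bᴴ)
  have hJ : Jᴴ = J := (pseudoinverse_isHermitian _).eq
  refine le_one_of_isHermitian_of_mul_self_eq ?_ ?_
  · simp only [IsHermitian, conjTranspose_mul, conjTranspose_conjTranspose, hJ, Matrix.mul_assoc]
  · calc Bᴴ * J * B * (Bᴴ * J * B) = Bᴴ * (J * (B * Bᴴ) * J) * B := by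
          simp only [Matrix.mul_assoc]
      _ = Bᴴ * J * B := by
          rw [pseudoinverse_mul_mul_pseudoinverse (isHermitian_mul_conjTranspose_self B)]

/-- **Douglas' factorization lemma**: the hypothesis forces the range of `N` into that of `B`, so
`C = Bᴴ (B Bᴴ)⁺ N` solves `B C = N`. -/
theorem exists_mul_eq_of_mul_conjTranspose_le [DecidableEq k] {N : Matrix m l 𝕜}
    {B : Matrix m k 𝕜} (h : N * Nᴴ ≤ B * Bᴴ) : ∃ C : Matrix k l 𝕜, C * Cᴴ ≤ 1 ∧ B * C = N := by
  have := Fintype.ofFinite m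
  set H := B * Bᴴ
  have hH : H.IsHermitian := isHermitian_mul_conjTranspose_self B
  set J := pseudoinverse H
  have hJ : Jᴴ = J := (pseudoinverse_isHermitian H).eq
  have hJHJ : J * H * J = J := pseudoinverse_mul_mul_pseudoinverse hH
  have hsupport : (1 - H * J) * N = 0 := by
    rw [← self_mul_conjTranspose_eq_zero]
    refine le_antisymm ?_ (posSemidef_self_mul_conjTranspose _).nonneg
    calc (1 - H * J) * N * ((1 - H * J) * N)ᴴ = (1 - H * J) * (N * Nᴴ) * (1 - H * J)ᴴ := by
          simp only [conjTranspose_mul, Matrix.mul_assoc]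
      _ ≤ (1 - H * J) * H * (1 - H * J)ᴴ := mul_mul_conjTranspose_le h _
      _ = 0 := by
          rw [Matrix.sub_mul, mul_pseudoinverse_mul hH, Matrix.one_mul, sub_self, Matrix.zero_mul]
  refine ⟨Bᴴ * J * N, ?_, ?_⟩
  · calc Bᴴ * J * N * (Bᴴ * J * N)ᴴ = Bᴴ * J * (N * Nᴴ) * (Bᴴ * J)ᴴ := by
          rw [conjTranspose_mul _ N]; simp only [Matrix.mul_assoc]
      _ ≤ Bᴴ * J * H * (Bᴴ * J)ᴴ := mul_mul_conjTranspose_le h _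
      _ = Bᴴ * (J * H * J) * B := by
          rw [conjTranspose_mul, conjTranspose_conjTranspose, hJ]; simp only [Matrix.mul_assoc]
      _ = Bᴴ * J * B := by rw [hJHJ]
      _ ≤ 1 := conjTranspose_mul_pseudoinverse_mul_le_one B
  · rw [Matrix.sub_mul, Matrix.one_mul, sub_eq_zero] at hsupport
    calc B * (Bᴴ * J * N) = H * J * N := by simp only [H, Matrix.mul_assoc]
      _ = N := hsupport.symm

theorem sqrt_isHermitian (A : Matrix n n 𝕜) : (CFC.sqrt A).IsHermitian :=
  (CFC.sqrt_nonneg A).isSelfAdjoint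

theorem abs_mul_conjTranspose_abs (M : Matrix n n 𝕜) :
    CFC.abs M * (CFC.abs M)ᴴ = Mᴴ * M := by
  have habs : (CFC.abs M)ᴴ = CFC.abs M := (CFC.abs_nonneg M).isSelfAdjoint
  rw [habs, CFC.abs_mul_abs, star_eq_conjTranspose]

theorem exists_contraction_conjTranspose_mul_eq_abs [DecidableEq n] (M : Matrix n n 𝕜) :
    ∃ W : Matrix n n 𝕜, W * Wᴴ ≤ 1 ∧ Mᴴ * W = CFC.abs M := by
  refine exists_mul_eq_of_mul_conjTranspose_le (le_of_eq ?_)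
  rw [abs_mul_conjTranspose_abs, conjTranspose_conjTranspose]

theorem exists_mul_eq_sqrt [DecidableEq n] {σ : Matrix n n 𝕜} (hσ : 0 ≤ σ) :
    ∃ Q : Matrix n n 𝕜, Q * σ * Qᴴ ≤ 1 ∧ Q * σ = CFC.sqrt σ := by
  set s := CFC.sqrt σ
  have hs : s.IsHermitian := sqrt_isHermitian σ
  set Q := pseudoinverse s
  have hQ : Q.IsHermitian := pseudoinverse_isHermitian s
  have hcomm : Q * s = s * Q := pseudoinverse_mul_self_comm hs
  have hQσ : Q * σ = s := by
    rw [← CFC.sqrt_mul_sqrt_self σ, ← Matrix.mul_assoc, hcomm, mul_pseudoinverse_mul hs]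
  refine ⟨Q, ?_, hQσ⟩
  rw [hQσ, hQ.eq]
  refine le_one_of_isHermitian_of_mul_self_eq ?_ ?_
  · rw [IsHermitian, conjTranspose_mul, hs.eq, hQ.eq, hcomm]
  · rw [← Matrix.mul_assoc, mul_pseudoinverse_mul hs]

theorem re_trace_le_re_trace {A B : Matrix n n 𝕜} (h : A ≤ B) :
    RCLike.re A.trace ≤ RCLike.re B.trace := by
  have h' := (le_iff.1 h).trace_nonneg
  rw [trace_sub, sub_nonneg] at h'
  exact RCLike.re_monotone h'

theorem add_conjTranspose_le_two [DecidableEq n] {C : Matrix n n 𝕜} (hC : C * Cᴴ ≤ 1) :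
    C + Cᴴ ≤ 1 + 1 := by
  have hsq : 0 ≤ (1 - C) * (1 - C)ᴴ := (posSemidef_self_mul_conjTranspose (1 - C)).nonneg
  calc C + Cᴴ ≤ C + Cᴴ + (1 - C) * (1 - C)ᴴ := le_add_of_nonneg_right hsq
    _ = 1 + C * Cᴴ := by rw [conjTranspose_sub, conjTranspose_one]; noncomm_ring
    _ ≤ 1 + 1 := add_le_add_right hC 1

theorem re_trace_mul_le_of_mul_conjTranspose_le_one [DecidableEq n] {A C : Matrix n n 𝕜}
    (hA : 0 ≤ A) (hC : C * Cᴴ ≤ 1) : RCLike.re (A * C).trace ≤ RCLike.re A.trace := by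
  set s := CFC.sqrt A
  have hs : sᴴ = s := sqrt_isHermitian A
  have htrace (M : Matrix n n 𝕜) : (s * M * sᴴ).trace = (A * M).trace := by
    rw [hs, trace_mul_comm, ← Matrix.mul_assoc, CFC.sqrt_mul_sqrt_self A]
  have hadjoint : RCLike.re (A * Cᴴ).trace = RCLike.re (A * C).trace := by
    rw [← RCLike.conj_re (A * C).trace, starRingEnd_apply, ← trace_conjTranspose,
      conjTranspose_mul, hA.posSemidef.1.eq, trace_mul_comm]
  have h := re_trace_le_re_trace (mul_mul_conjTranspose_le (add_conjTranspose_le_two hC) s)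
  rw [htrace, htrace, Matrix.mul_add, Matrix.mul_add, Matrix.mul_one, trace_add, trace_add,
    map_add, map_add, hadjoint] at h
  linarith

end Loewner

section SquareRoot

open scoped MatrixOrder

variable {S : Type*} [Fintype S] [DecidableEq S]

theorem psdSqrt_eq_sqrt (A : Matrix S S ℂ) : psdSqrt A = CFC.sqrt A := by
  by_cases hA : A.PosSemidef
  · rw [psdSqrt, dif_pos hA, CFC.sqrt_eq_real_sqrt A hA.nonneg, cfcₙ_eq_cfc, hA.1.cfc_eq,
      IsHermitian.cfc, Unitary.conjStarAlgAut_apply]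
    rfl
  · rw [psdSqrt, dif_neg hA, CFC.sqrt_of_not_nonneg (mt LE.le.posSemidef hA)]

theorem fidelity_eq_re_trace_abs {ρ : Matrix S S ℂ} (hρ : 0 ≤ ρ) (σ : Matrix S S ℂ) :
    fidelity ρ σ = (CFC.abs (CFC.sqrt ρ * CFC.sqrt σ)).trace.re := by
  have hr : star (CFC.sqrt ρ) = CFC.sqrt ρ := sqrt_isHermitian ρ
  have hs : star (CFC.sqrt σ) = CFC.sqrt σ := sqrt_isHermitian σ
  have hrr : CFC.sqrt ρ * CFC.sqrt ρ = ρ := CFC.sqrt_mul_sqrt_self ρ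
  rw [fidelity, psdSqrt_eq_sqrt, psdSqrt_eq_sqrt, CFC.abs, star_mul, hr, hs]
  nth_rw 1 [← hrr]
  simp only [Matrix.mul_assoc]

theorem re_trace_mul_le_fidelity {ρ σ T : Matrix S S ℂ} (hσ : 0 ≤ σ) (h : T * σ * Tᴴ ≤ ρ) :
    (T * σ).trace.re ≤ fidelity ρ σ := by
  have hρ : 0 ≤ ρ := (hσ.posSemidef.mul_mul_conjTranspose_same T).nonneg.trans h
  rw [fidelity_eq_re_trace_abs hρ]
  set r := CFC.sqrt ρ
  set s := CFC.sqrt σ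
  have hr : rᴴ = r := sqrt_isHermitian ρ
  have hs : sᴴ = s := sqrt_isHermitian σ
  have hrr : r * r = ρ := CFC.sqrt_mul_sqrt_self ρ
  have hss : s * s = σ := CFC.sqrt_mul_sqrt_self σ
  have hle : s * T * s * (s * T * s)ᴴ ≤ CFC.abs (r * s) * (CFC.abs (r * s))ᴴ :=
    calc s * T * s * (s * T * s)ᴴ = s * (T * σ * Tᴴ) * sᴴ := by
          simp only [conjTranspose_mul, hs, ← hss, Matrix.mul_assoc]
      _ ≤ s * ρ * sᴴ := mul_mul_conjTranspose_le h s
      _ = (r * s)ᴴ * (r * s) := by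
          simp only [conjTranspose_mul, hr, hs, ← hrr, Matrix.mul_assoc]
      _ = CFC.abs (r * s) * (CFC.abs (r * s))ᴴ := (abs_mul_conjTranspose_abs _).symm
  obtain ⟨C, hC, hfactor⟩ := exists_mul_eq_of_mul_conjTranspose_le hle
  calc (T * σ).trace.re = (s * T * s).trace.re := by
        rw [Matrix.mul_assoc s, trace_mul_comm s, Matrix.mul_assoc, hss]
    _ = (CFC.abs (r * s) * C).trace.re := by rw [hfactor]
    _ ≤ (CFC.abs (r * s)).trace.re :=
        re_trace_mul_le_of_mul_conjTranspose_le_one (CFC.abs_nonneg _) hC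

theorem exists_re_trace_mul_eq_fidelity {ρ σ : Matrix S S ℂ} (hρ : 0 ≤ ρ) (hσ : 0 ≤ σ) :
    ∃ T : Matrix S S ℂ, T * σ * Tᴴ ≤ ρ ∧ (T * σ).trace.re = fidelity ρ σ := by
  rw [fidelity_eq_re_trace_abs hρ]
  set r := CFC.sqrt ρ
  set s := CFC.sqrt σ
  have hr : rᴴ = r := sqrt_isHermitian ρ
  have hs : sᴴ = s := sqrt_isHermitian σ
  obtain ⟨W, hW, hWabs⟩ := exists_contraction_conjTranspose_mul_eq_abs (r * s)
  obtain ⟨Q, hQ, hQσ⟩ := exists_mul_eq_sqrt hσ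
  refine ⟨r * W * Q, ?_, ?_⟩
  · calc r * W * Q * σ * (r * W * Q)ᴴ = r * W * (Q * σ * Qᴴ) * (r * W)ᴴ := by
          simp only [conjTranspose_mul, Matrix.mul_assoc]
      _ ≤ r * W * 1 * (r * W)ᴴ := mul_mul_conjTranspose_le hQ _
      _ = r * (W * Wᴴ) * rᴴ := by
          simp only [conjTranspose_mul, Matrix.mul_one, Matrix.mul_assoc]
      _ ≤ r * 1 * rᴴ := mul_mul_conjTranspose_le hW r
      _ = ρ := by rw [Matrix.mul_one, hr, CFC.sqrt_mul_sqrt_self ρ]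
  · calc (r * W * Q * σ).trace.re = (r * W * s).trace.re := by rw [Matrix.mul_assoc _ Q, hQσ]
      _ = ((r * s)ᴴ * W).trace.re := by
          rw [trace_mul_comm, conjTranspose_mul, hr, hs, Matrix.mul_assoc]
      _ = (CFC.abs (r * s)).trace.re := by rw [hWabs]

end SquareRoot

section Marginal

open scoped MatrixOrder

variable {X B : Type*} [Fintype X] [Fintype B]

theorem margB_eq_sum_submatrix (M : Matrix (X × B) (X × B) ℂ) :
    margB M = ∑ x, M.submatrix (Prod.mk x) (Prod.mk x) := by
  ext b b'
  simp only [margB, of_apply, Matrix.sum_apply, submatrix_apply]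

theorem margB_posSemidef {M : Matrix (X × B) (X × B) ℂ} (hM : M.PosSemidef) :
    (margB M).PosSemidef := by
  rw [margB_eq_sum_submatrix]
  exact posSemidef_sum _ fun x _ => hM.submatrix _

theorem margB_add (M N : Matrix (X × B) (X × B) ℂ) : margB (M + N) = margB M + margB N := by
  ext b b'
  simp only [margB, of_apply, Matrix.add_apply, Finset.sum_add_distrib]

theorem trace_margB (M : Matrix (X × B) (X × B) ℂ) : (margB M).trace = M.trace := by
  simp only [margB, trace, diag_apply, of_apply, Fintype.sum_prod_type]
  exact Finset.sum_comm

theorem margB_kronecker (ψ : Matrix X X ℂ) (R : Matrix B B ℂ) :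
    margB (ψ ⊗ₖ R) = ψ.trace • R := by
  ext b b'
  simp only [margB, of_apply, kroneckerMap_apply, Matrix.smul_apply, smul_eq_mul, trace,
    diag_apply, Finset.sum_mul]

theorem margB_one_kronecker_mul [DecidableEq X] (T : Matrix B B ℂ)
    (M : Matrix (X × B) (X × B) ℂ) : margB ((1 ⊗ₖ T) * M) = T * margB M := by
  ext b b'
  simp only [margB, of_apply, mul_apply, kroneckerMap_apply, Fintype.sum_prod_type, one_apply,
    ite_mul, one_mul, zero_mul, Finset.sum_ite_irrel, Finset.sum_const_zero,
    Finset.sum_ite_eq, Finset.mem_univ, if_true, Finset.mul_sum]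
  exact Finset.sum_comm

theorem margB_conjTranspose (M : Matrix (X × B) (X × B) ℂ) : margB Mᴴ = (margB M)ᴴ := by
  ext b b'
  simp only [margB, of_apply, conjTranspose_apply, star_sum]

theorem margB_mul_conjTranspose_one_kronecker [DecidableEq X] (T : Matrix B B ℂ)
    (M : Matrix (X × B) (X × B) ℂ) : margB (M * (1 ⊗ₖ T)ᴴ) = margB M * Tᴴ := by
  rw [← conjTranspose_conjTranspose (M * _), margB_conjTranspose, conjTranspose_mul,
    conjTranspose_conjTranspose, margB_one_kronecker_mul, conjTranspose_mul, margB_conjTranspose,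
    conjTranspose_conjTranspose]

theorem one_le_of_le_smul_kronecker_margB {σ : Matrix (X × B) (X × B) ℂ} {ψ : Matrix X X ℂ} {K : ℝ}
    (hσ : σ.trace = 1) (hψ : ψ.trace = 1) (h : σ ≤ K • (ψ ⊗ₖ margB σ)) : 1 ≤ K := by
  simpa [trace_smul, trace_kronecker, trace_margB, hσ, hψ] using re_trace_le_re_trace h

end Marginal

section Extension

open scoped MatrixOrder

variable {X B : Type*} [Fintype X] [DecidableEq X] [Fintype B]
  {σ : Matrix (X × B) (X × B) ℂ} {ψ : Matrix X X ℂ} {T ρ : Matrix B B ℂ} {K : ℝ}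

/-- The extension of `ρ` to `X × B` obtained by transporting `σ` along `1 ⊗ T` and adding, in
product with `ψ`, the part of `ρ` that the transported marginal misses. It is meant for `T` with
`T σ_B Tᴴ ≤ ρ`. -/
def substateExtension (ψ : Matrix X X ℂ) (σ : Matrix (X × B) (X × B) ℂ) (T ρ : Matrix B B ℂ) :
    Matrix (X × B) (X × B) ℂ :=
  (1 ⊗ₖ T) * σ * (1 ⊗ₖ T)ᴴ + ψ ⊗ₖ (ρ - T * margB σ * Tᴴ)

theorem margB_substateExtension (hψ : ψ.trace = 1) : margB (substateExtension ψ σ T ρ) = ρ := by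
  rw [substateExtension, margB_add, margB_mul_conjTranspose_one_kronecker,
    margB_one_kronecker_mul, margB_kronecker, hψ, one_smul, add_sub_cancel]

theorem conjugate_le_substateExtension (hψ : ψ.PosSemidef) (hT : T * margB σ * Tᴴ ≤ ρ) :
    (1 ⊗ₖ T) * σ * (1 ⊗ₖ T)ᴴ ≤ substateExtension ψ σ T ρ :=
  le_add_of_nonneg_right (hψ.kronecker hT).nonneg

theorem substateExtension_nonneg (hψ : ψ.PosSemidef) (hσ : σ.PosSemidef)
    (hT : T * margB σ * Tᴴ ≤ ρ) : 0 ≤ substateExtension ψ σ T ρ :=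
  (hσ.mul_mul_conjTranspose_same (1 ⊗ₖ T)).nonneg.trans (conjugate_le_substateExtension hψ hT)

theorem re_trace_mul_margB_le_fidelity_substateExtension [DecidableEq B]
    (hψ : ψ.PosSemidef) (hσ : σ.PosSemidef) (hT : T * margB σ * Tᴴ ≤ ρ) :
    (T * margB σ).trace.re ≤ fidelity (substateExtension ψ σ T ρ) σ := by
  rw [← margB_one_kronecker_mul, trace_margB]
  exact re_trace_mul_le_fidelity hσ.nonneg (conjugate_le_substateExtension hψ hT)

theorem substateExtension_le (hψ : ψ.PosSemidef) (hK : 1 ≤ K) (hσ : σ ≤ K • (ψ ⊗ₖ margB σ))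
    (hT : T * margB σ * Tᴴ ≤ ρ) : substateExtension ψ σ T ρ ≤ K • (ψ ⊗ₖ ρ) := by
  have hconj : (1 ⊗ₖ T) * (K • (ψ ⊗ₖ margB σ)) * (1 ⊗ₖ T)ᴴ =
      K • (ψ ⊗ₖ (T * margB σ * Tᴴ)) := by
    rw [conjTranspose_kronecker, conjTranspose_one, Matrix.mul_smul, Matrix.smul_mul,
      ← mul_kronecker_mul, ← mul_kronecker_mul, Matrix.one_mul, Matrix.mul_one]
  calc substateExtension ψ σ T ρ
      ≤ K • (ψ ⊗ₖ (T * margB σ * Tᴴ)) + K • (ψ ⊗ₖ (ρ - T * margB σ * Tᴴ)) :=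
        add_le_add (hconj ▸ mul_mul_conjTranspose_le hσ (1 ⊗ₖ T))
          (le_smul_of_one_le_left (hψ.kronecker hT).nonneg hK)
    _ = K • (ψ ⊗ₖ ρ) := by rw [← smul_add, ← kronecker_add, add_sub_cancel]

theorem unsmoothed_substate_perturbation_general [DecidableEq B]
    (hσ : IsState σ) (hψ : IsState ψ) (hsub : σ ≤ K • (ψ ⊗ₖ margB σ)) (hρ : IsState ρ) :
    ∃ ρ' : Matrix (X × B) (X × B) ℂ, IsState ρ' ∧ margB ρ' = ρ ∧
      fidelity ρ (margB σ) ≤ fidelity ρ' σ ∧ ρ' ≤ K • (ψ ⊗ₖ ρ) := by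
  have hK : 1 ≤ K := one_le_of_le_smul_kronecker_margB hσ.2 hψ.2 hsub
  obtain ⟨T, hT, hfid⟩ :=
    exists_re_trace_mul_eq_fidelity hρ.1.nonneg (margB_posSemidef hσ.1).nonneg
  have hmarg : margB (substateExtension ψ σ T ρ) = ρ := margB_substateExtension hψ.2
  refine ⟨substateExtension ψ σ T ρ, ⟨?_, ?_⟩, hmarg, ?_, ?_⟩
  · exact (substateExtension_nonneg hψ.1 hσ.1 hT).posSemidef
  · rw [← trace_margB, hmarg, hρ.2]
  · exact hfid ▸ re_trace_mul_margB_le_fidelity_substateExtension hψ.1 hσ.1 hT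
  · exact substateExtension_le hψ.1 hK hsub hT

end Extension

/-- **Unsmoothed substate perturbation** (construction step in the proof of the
Substate Perturbation Lemma). -/
theorem unsmoothed_substate_perturbation
    {X B : Type*} [Fintype X] [DecidableEq X] [Nonempty X]
    [Fintype B] [DecidableEq B] [Nonempty B]
    (σXB : Matrix (X × B) (X × B) ℂ) (ψX : Matrix X X ℂ) (K : ℝ)
    (hσ : IsState σXB) (hψ : IsState ψX) (hK : 0 < K)
    (hsub : (K • (ψX ⊗ₖ margB σXB) - σXB).PosSemidef) :
    ∀ ρB : Matrix B B ℂ, IsState ρB →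
      ∃ ρ'XB : Matrix (X × B) (X × B) ℂ, IsState ρ'XB ∧
        margB ρ'XB = ρB ∧
        fidelity ρ'XB σXB ≥ fidelity ρB (margB σXB) ∧
        ((2 * K) • (ψX ⊗ₖ ρB) - ρ'XB).PosSemidef := by
  intro ρB hρ
  obtain ⟨ρ', hρ', hmarg, hfid, hle⟩ := unsmoothed_substate_perturbation_general hσ hψ hsub hρ
  refine ⟨ρ', hρ', hmarg, hfid, ?_⟩
  rw [two_mul, add_smul, add_sub_assoc]
  exact ((hψ.1.kronecker hρ.1).smul hK.le).add hle

end
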